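/- arXiv:2409.19889 — 3 statements merged into one kernel-verified Lean document; each statement's English description precedes it below -/
import Mathlib

section
/- Let q > 1 and p < q − 1 be real numbers. Then there is a constant C > 0 such that for all s ≥ 0 the improper integral ∫_s^∞ (1+τ)^p sin((1+τ)^q) dτ converges and satisfies |∫_s^∞ (1+τ)^p sin((1+τ)^q) dτ| ≤ C (1+s)^{p−q+1}. -/
open MeasureTheory Filter Real Set intervalIntegral

/-!
Write `x ^ p * sin (x ^ q) = u x * v' x` with `u x = x ^ (p - q + 1)` and `v x = -cos (x ^ q) / q`.
Since `u` decreases to `0` and `|v| ≤ 1 / |q|`, integration by parts on `[a, ∞)` (Dirichlet's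
test) shows that the improper integral converges, with absolute value at most `2 / |q| * u a`. Only
for `q = 0` is there no oscillation, but then `p < -1` and the integral converges absolutely.
-/

open scoped Topology

section Dirichlet

variable {u u' : ℝ → ℝ} {a : ℝ}

theorem nonneg_of_deriv_nonpos_of_tendsto_zero (hu : ∀ x ∈ Ici a, HasDerivAt u (u' x) x)
    (hu' : ∀ x ∈ Ioi a, u' x ≤ 0) (hu₀ : Tendsto u atTop (𝓝 0)) : 0 ≤ u a := by
  have hint : ∫ x in Ioi a, u' x = 0 - u a := integral_Ioi_of_hasDerivAt_of_nonpos' hu hu' hu₀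
  have hnonpos : ∫ x in Ioi a, u' x ≤ 0 := setIntegral_nonpos measurableSet_Ioi hu'
  linarith

variable {E : Type*} [NormedAddCommGroup E] [NormedSpace ℝ E] {v v' : ℝ → E} {M : ℝ}

theorem norm_integral_Ioi_deriv_smul_le (hu : ∀ x ∈ Ici a, HasDerivAt u (u' x) x)
    (hu' : ∀ x ∈ Ioi a, u' x ≤ 0) (hu₀ : Tendsto u atTop (𝓝 0)) (hvM : ∀ x ∈ Ioi a, ‖v x‖ ≤ M) :
    ‖∫ x in Ioi a, u' x • v x‖ ≤ M * u a := by
  have hint : IntegrableOn u' (Ioi a) := integrableOn_Ioi_deriv_of_nonpos' hu hu' hu₀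
  have hbound : ∀ x ∈ Ioi a, ‖u' x • v x‖ ≤ -u' x * M := fun x hx ↦ by
    rw [norm_smul, Real.norm_of_nonpos (hu' x hx)]
    exact mul_le_mul_of_nonneg_left (hvM x hx) (neg_nonneg.2 (hu' x hx))
  calc ‖∫ x in Ioi a, u' x • v x‖
      ≤ ∫ x in Ioi a, -u' x * M :=
        MeasureTheory.norm_integral_le_of_norm_le (hint.neg.mul_const M)
          (ae_restrict_of_forall_mem measurableSet_Ioi hbound)
    _ = M * u a := by
        rw [MeasureTheory.integral_mul_const, MeasureTheory.integral_neg,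
          integral_Ioi_of_hasDerivAt_of_nonpos' hu hu' hu₀]
        ring

variable [CompleteSpace E]

theorem tendsto_integral_smul_deriv_atTop (hu : ∀ x ∈ Ici a, HasDerivAt u (u' x) x)
    (hv : ∀ x ∈ Ici a, HasDerivAt v (v' x) x) (hu' : IntegrableOn u' (Ioi a))
    (hv' : LocallyIntegrableOn v' (Ici a)) (hu₀ : Tendsto u atTop (𝓝 0))
    (hvM : ∀ x ∈ Ici a, ‖v x‖ ≤ M) :
    Tendsto (fun b ↦ ∫ x in a..b, u x • v' x) atTop
      (𝓝 (-(u a • v a) - ∫ x in Ioi a, u' x • v x)) := by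
  have hint : IntegrableOn (fun x ↦ u' x • v x) (Ioi a) := by
    have hcont : ContinuousOn v (Ioi a) := fun x hx ↦
      (hv x (mem_Ici_of_Ioi hx)).continuousAt.continuousWithinAt
    exact hu'.smul_bdd M (hcont.aestronglyMeasurable measurableSet_Ioi)
      (ae_restrict_of_forall_mem measurableSet_Ioi fun x hx ↦ hvM x (mem_Ici_of_Ioi hx))
  have hboundary : Tendsto (fun b ↦ u b • v b) atTop (𝓝 0) :=
    hu₀.zero_smul_isBoundedUnder_le
      (isBoundedUnder_of_eventually_le ((eventually_ge_atTop a).mono hvM))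
  have hlim := (hboundary.sub_const (u a • v a)).sub
    (intervalIntegral_tendsto_integral_Ioi a hint tendsto_id)
  rw [zero_sub] at hlim
  refine hlim.congr' ((eventually_ge_atTop a).mono fun b hab ↦ ?_)
  have hsub : uIcc a b ⊆ Ici a := uIcc_of_le hab ▸ Icc_subset_Ici_self
  refine (integral_smul_deriv_eq_deriv_smul (fun x hx ↦ hu x (hsub hx))
    (fun x hx ↦ hv x (hsub hx)) ?_ ?_).symm
  · exact (intervalIntegrable_iff_integrableOn_Ioc_of_le hab).2 (hu'.mono_set Ioc_subset_Ioi_self)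
  · exact (hv'.integrableOn_compact_subset hsub isCompact_uIcc).intervalIntegrable

theorem exists_tendsto_integral_smul_deriv_atTop (hu : ∀ x ∈ Ici a, HasDerivAt u (u' x) x)
    (hv : ∀ x ∈ Ici a, HasDerivAt v (v' x) x) (hu' : ∀ x ∈ Ioi a, u' x ≤ 0)
    (hv' : LocallyIntegrableOn v' (Ici a)) (hu₀ : Tendsto u atTop (𝓝 0))
    (hvM : ∀ x ∈ Ici a, ‖v x‖ ≤ M) :
    ∃ L : E, Tendsto (fun b ↦ ∫ x in a..b, u x • v' x) atTop (𝓝 L) ∧ ‖L‖ ≤ 2 * M * u a := by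
  refine ⟨_, tendsto_integral_smul_deriv_atTop hu hv
    (integrableOn_Ioi_deriv_of_nonpos' hu hu' hu₀) hv' hu₀ hvM, ?_⟩
  have hua : 0 ≤ u a := nonneg_of_deriv_nonpos_of_tendsto_zero hu hu' hu₀
  calc ‖-(u a • v a) - ∫ x in Ioi a, u' x • v x‖
      ≤ ‖u a • v a‖ + ‖∫ x in Ioi a, u' x • v x‖ := by
        simpa only [norm_neg] using norm_sub_le (-(u a • v a)) (∫ x in Ioi a, u' x • v x)
    _ ≤ u a * M + M * u a := by
        rw [norm_smul, Real.norm_of_nonneg hua]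
        exact add_le_add (mul_le_mul_of_nonneg_left (hvM a self_mem_Ici) hua)
          (norm_integral_Ioi_deriv_smul_le hu hu' hu₀ fun x hx ↦ hvM x (mem_Ici_of_Ioi hx))
    _ = 2 * M * u a := by ring

end Dirichlet

section Power

variable {p q a : ℝ} {E : Type*} [NormedAddCommGroup E] [NormedSpace ℝ E] {f F : ℝ → E}

theorem hasDerivAt_inv_smul_comp_rpow {x : ℝ} {F' : E} (hq : q ≠ 0) (hx : 0 < x)
    (hF : HasDerivAt F F' (x ^ q)) :
    HasDerivAt (fun x ↦ q⁻¹ • F (x ^ q)) (x ^ (q - 1) • F') x := by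
  have hpow : HasDerivAt (fun x ↦ x ^ q) (q * x ^ (q - 1)) x :=
    hasDerivAt_rpow_const (Or.inl hx.ne')
  refine ((hF.scomp x hpow).const_smul q⁻¹).congr_deriv ?_
  rw [smul_smul, inv_mul_cancel_left₀ hq]

theorem exists_tendsto_integral_rpow_smul_comp_rpow [CompleteSpace E] {M : ℝ} (hq : q ≠ 0)
    (hpq : p < q - 1) (ha : 0 < a) (hf : ContinuousOn f (Ioi 0))
    (hF : ∀ y ∈ Ioi 0, HasDerivAt F (f y) y) (hFM : ∀ y ∈ Ioi 0, ‖F y‖ ≤ M) :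
    ∃ L : E, Tendsto (fun b ↦ ∫ x in a..b, x ^ p • f (x ^ q)) atTop (𝓝 L) ∧
      ‖L‖ ≤ 2 * (M / |q|) * a ^ (p - q + 1) := by
  have hr : p - q + 1 < 0 := by linarith
  have hpos : ∀ x ∈ Ici a, 0 < x := fun x hx ↦ ha.trans_le hx
  have hderiv (t : ℝ) : ∀ x ∈ Ici a, HasDerivAt (fun x ↦ x ^ t) (t * x ^ (t - 1)) x :=
    fun x hx ↦ hasDerivAt_rpow_const (Or.inl (hpos x hx).ne')
  have hcont (t : ℝ) : ContinuousOn (fun x : ℝ ↦ x ^ t) (Ici a) :=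
    fun x hx ↦ (hderiv t x hx).continuousAt.continuousWithinAt
  have hu' : ∀ x ∈ Ioi a, (p - q + 1) * x ^ (p - q + 1 - 1) ≤ 0 := fun x hx ↦
    mul_nonpos_of_nonpos_of_nonneg hr.le (rpow_nonneg (ha.trans hx).le _)
  have hu₀ : Tendsto (fun x : ℝ ↦ x ^ (p - q + 1)) atTop (𝓝 0) := by
    simpa only [neg_neg] using tendsto_rpow_neg_atTop (neg_pos.2 hr)
  have hv : ∀ x ∈ Ici a, HasDerivAt (fun x ↦ q⁻¹ • F (x ^ q)) (x ^ (q - 1) • f (x ^ q)) x :=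
    fun x hx ↦ hasDerivAt_inv_smul_comp_rpow hq (hpos x hx)
      (hF _ (rpow_pos_of_pos (hpos x hx) q))
  have hv' : LocallyIntegrableOn (fun x ↦ x ^ (q - 1) • f (x ^ q)) (Ici a) :=
    ((hcont (q - 1)).smul (hf.comp (hcont q) fun x hx ↦
      rpow_pos_of_pos (hpos x hx) q)).locallyIntegrableOn measurableSet_Ici
  have hvM : ∀ x ∈ Ici a, ‖q⁻¹ • F (x ^ q)‖ ≤ M / |q| := fun x hx ↦ by
    rw [norm_smul, norm_inv, Real.norm_eq_abs, inv_mul_eq_div]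
    exact div_le_div_of_nonneg_right (hFM _ (rpow_pos_of_pos (hpos x hx) q)) (abs_nonneg q)
  obtain ⟨L, hL, hLM⟩ :=
    exists_tendsto_integral_smul_deriv_atTop (hderiv (p - q + 1)) hv hu' hv' hu₀ hvM
  refine ⟨L, hL.congr' ((eventually_ge_atTop a).mono fun b hab ↦ ?_), hLM⟩
  refine integral_congr fun x hx ↦ ?_
  have hx₀ : 0 < x := hpos x (uIcc_of_le hab ▸ hx).1
  simp only [smul_smul, ← rpow_add hx₀]
  ring_nf

theorem exists_tendsto_integral_rpow_mul_sin_rpow_of_ne_zero (hq : q ≠ 0) (hpq : p < q - 1)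
    (ha : 0 < a) :
    ∃ L : ℝ, Tendsto (fun b ↦ ∫ x in a..b, x ^ p * sin (x ^ q)) atTop (𝓝 L) ∧
      |L| ≤ 2 / |q| * a ^ (p - q + 1) := by
  have hF : ∀ y ∈ Ioi (0 : ℝ), HasDerivAt (fun y ↦ -cos y) (sin y) y := fun y _ ↦ by
    simpa only [neg_neg] using (hasDerivAt_cos y).fun_neg
  have hFM : ∀ y ∈ Ioi (0 : ℝ), ‖-cos y‖ ≤ 1 := fun y _ ↦ by
    simpa only [norm_neg, Real.norm_eq_abs] using abs_cos_le_one y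
  simpa only [smul_eq_mul, Real.norm_eq_abs, mul_one_div] using
    exists_tendsto_integral_rpow_smul_comp_rpow hq hpq ha continuous_sin.continuousOn hF hFM

theorem tendsto_integral_rpow_atTop (hp : p < -1) (ha : 0 < a) :
    Tendsto (fun b ↦ ∫ x in a..b, x ^ p) atTop (𝓝 (-a ^ (p + 1) / (p + 1))) := by
  rw [← integral_Ioi_rpow_of_lt hp ha]
  exact intervalIntegral_tendsto_integral_Ioi a (integrableOn_Ioi_rpow_of_lt hp ha) tendsto_id

theorem exists_tendsto_integral_rpow_smul_const [CompleteSpace E] (hp : p < -1) (c : E)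
    (ha : 0 < a) :
    ∃ L : E, Tendsto (fun b ↦ ∫ x in a..b, x ^ p • c) atTop (𝓝 L) ∧
      ‖L‖ ≤ ‖c‖ / |p + 1| * a ^ (p + 1) := by
  refine ⟨(-a ^ (p + 1) / (p + 1)) • c, ?_, ?_⟩
  · simpa only [intervalIntegral.integral_smul_const] using
      (tendsto_integral_rpow_atTop hp ha).smul_const c
  · rw [norm_smul, norm_div, norm_neg, Real.norm_of_nonneg (rpow_nonneg ha.le _),
      Real.norm_eq_abs]
    exact le_of_eq (by ring)

theorem exists_forall_tendsto_integral_rpow_mul_sin_rpow (hpq : p < q - 1) :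
    ∃ C > (0 : ℝ), ∀ a > (0 : ℝ), ∃ L : ℝ,
      Tendsto (fun b ↦ ∫ x in a..b, x ^ p * sin (x ^ q)) atTop (𝓝 L) ∧
      |L| ≤ C * a ^ (p - q + 1) := by
  rcases ne_or_eq q 0 with hq | rfl
  · exact ⟨2 / |q|, div_pos two_pos (abs_pos.2 hq), fun a ha ↦
      exists_tendsto_integral_rpow_mul_sin_rpow_of_ne_zero hq hpq ha⟩
  · have hp : p < -1 := by linarith
    have hsin : 0 < |sin 1| := abs_pos.2 (sin_pos_of_pos_of_le_one one_pos le_rfl).ne'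
    refine ⟨|sin 1| / |p + 1|, div_pos hsin (abs_pos.2 (by linarith)), fun a ha ↦ ?_⟩
    simpa only [rpow_zero, sub_zero, smul_eq_mul, Real.norm_eq_abs] using
      exists_tendsto_integral_rpow_smul_const hp (sin 1) ha

end Power

theorem stmt15_general (p q : ℝ) (hpq : p < q - 1) :
    ∃ C > (0 : ℝ), ∀ s > (-1 : ℝ), ∃ L : ℝ,
      Tendsto (fun A ↦ ∫ τ in s..A, (1 + τ) ^ p * sin ((1 + τ) ^ q)) atTop (𝓝 L) ∧
      |L| ≤ C * (1 + s) ^ (p - q + 1) := by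
  obtain ⟨C, hC, hbound⟩ := exists_forall_tendsto_integral_rpow_mul_sin_rpow hpq
  refine ⟨C, hC, fun s hs ↦ ?_⟩
  obtain ⟨L, hL, hLC⟩ := hbound (1 + s) (by linarith)
  refine ⟨L, (hL.comp (tendsto_atTop_add_const_left atTop 1 tendsto_id)).congr fun A ↦ ?_, hLC⟩
  exact (integral_comp_add_left (fun x ↦ x ^ p * sin (x ^ q)) 1).symm

/-- For `q > 1` and `p < q - 1`, the improper integral
`∫_s^∞ (1+τ)^p sin ((1+τ)^q) dτ` converges for every `s ≥ 0` and is bounded by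
`C (1+s)^(p-q+1)`. -/
theorem stmt15 (p q : ℝ) (hq : 1 < q) (hpq : p < q - 1) :
    ∃ C > (0:ℝ), ∀ s ≥ (0:ℝ), ∃ L : ℝ,
      Tendsto (fun A => ∫ τ in s..A, (1 + τ) ^ p * Real.sin ((1 + τ) ^ q))
        atTop (nhds L) ∧
      |L| ≤ C * (1 + s) ^ (p - q + 1) := by
  obtain ⟨C, hC, hbound⟩ := stmt15_general p q hpq
  exact ⟨C, hC, fun s hs ↦ hbound s (by linarith)⟩
end

section
/- Let p ≥ −1 and q > 1 with p < q − 2, and set σ₁(t) := (1+t)^p sin((1+t)^q) for t ≥ 0. Then there is a constant C > 0 such that for all t ≥ 0, ∫_t^∞ |∫_s^∞ σ₁(τ) dτ| ds ≤ C (1+t)^{p−q+2}. -/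
open MeasureTheory Filter Real Set intervalIntegral

/-!
Write `x ^ p * sin (x ^ q) = x ^ (p - q + 1) * (x ^ (q - 1) * sin (x ^ q))`. The second factor is
the derivative of the bounded function `-cos (x ^ q) / q`, so integrating by parts against the
decreasing weight `x ^ (p - q + 1)` bounds the tail integral from `a` on by
`2 / |q| * a ^ (p - q + 1)`, which is integrable at infinity because `p - q + 1 < -1`.
-/

theorem intervalIntegrable_deriv_of_nonpos {g g' : ℝ → ℝ} {a b : ℝ}
    (hcont : ContinuousOn g (uIcc a b))
    (hderiv : ∀ x ∈ Ioo (min a b) (max a b), HasDerivAt g (g' x) x)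
    (hneg : ∀ x ∈ Ioo (min a b) (max a b), g' x ≤ 0) : IntervalIntegrable g' volume a b := by
  have hint_neg : IntervalIntegrable (fun x => -g' x) volume a b :=
    intervalIntegrable_deriv_of_nonneg hcont.neg (fun x hx => (hderiv x hx).neg)
      (fun x hx => neg_nonneg.2 (hneg x hx))
  simpa only [Pi.neg_def, neg_neg] using hint_neg.neg

section NormedSpace

variable {E : Type*} [NormedAddCommGroup E] [NormedSpace ℝ E]

theorem norm_integral_smul_deriv_le_of_deriv_nonpos [CompleteSpace E] {u u' : ℝ → ℝ}
    {v v' : ℝ → E} {a b M : ℝ} (hab : a ≤ b)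
    (hu : ∀ x ∈ Icc a b, HasDerivAt u (u' x) x) (hv : ∀ x ∈ Icc a b, HasDerivAt v (v' x) x)
    (hv'_int : IntervalIntegrable v' volume a b) (hu'_nonpos : ∀ x ∈ Icc a b, u' x ≤ 0)
    (hub : 0 ≤ u b) (hvM : ∀ x ∈ Icc a b, ‖v x‖ ≤ M) :
    ‖∫ x in a..b, u x • v' x‖ ≤ 2 * M * u a := by
  rw [← uIcc_of_le hab] at hu hv hu'_nonpos hvM
  have hu'_int : IntervalIntegrable u' volume a b :=
    intervalIntegrable_deriv_of_nonpos (HasDerivAt.continuousOn hu)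
      (fun x hx => hu x (Ioo_subset_Icc_self hx))
      (fun x hx => hu'_nonpos x (Ioo_subset_Icc_self hx))
  have integral_u' : ∫ x in a..b, u' x = u b - u a := integral_eq_sub_of_hasDerivAt hu hu'_int
  have hu_anti : u b ≤ u a := by
    have := integral_nonneg (μ := volume) hab fun x hx =>
      neg_nonneg.2 (hu'_nonpos x (Icc_subset_uIcc hx))
    rw [intervalIntegral.integral_neg, integral_u'] at this
    linarith
  have norm_smul_v_le : ∀ x ∈ uIcc a b, ∀ r : ℝ, ‖r • v x‖ ≤ |r| * M := fun x hx r => by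
    rw [norm_smul, norm_eq_abs]
    exact mul_le_mul_of_nonneg_left (hvM x hx) (abs_nonneg r)
  have boundary_b : ‖u b • v b‖ ≤ u b * M := by
    simpa only [abs_of_nonneg hub] using norm_smul_v_le b right_mem_uIcc (u b)
  have boundary_a : ‖u a • v a‖ ≤ u a * M := by
    simpa only [abs_of_nonneg (hub.trans hu_anti)] using norm_smul_v_le a left_mem_uIcc (u a)
  have remainder : ‖∫ x in a..b, u' x • v x‖ ≤ (u a - u b) * M := calc
    _ ≤ ∫ x in a..b, -u' x * M := by
      refine norm_integral_le_of_norm_le hab (ae_of_all _ fun x hx => ?_) (hu'_int.neg.mul_const M)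
      have hx' := Icc_subset_uIcc (Ioc_subset_Icc_self hx)
      simpa only [abs_of_nonpos (hu'_nonpos x hx')] using norm_smul_v_le x hx' (u' x)
    _ = (u a - u b) * M := by
      rw [intervalIntegral.integral_mul_const, intervalIntegral.integral_neg, integral_u', neg_sub]
  calc ‖∫ x in a..b, u x • v' x‖
      = ‖u b • v b - u a • v a - ∫ x in a..b, u' x • v x‖ := by
        rw [integral_smul_deriv_eq_deriv_smul hu hv hu'_int hv'_int]
    _ ≤ ‖u b • v b‖ + ‖u a • v a‖ + ‖∫ x in a..b, u' x • v x‖ :=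
        (norm_sub_le _ _).trans (add_le_add_left (norm_sub_le _ _) _)
    _ ≤ u b * M + u a * M + (u a - u b) * M := by gcongr
    _ = 2 * M * u a := by ring

theorem continuousOn_Ici_of_tendsto_intervalIntegral {μ : Measure ℝ} [NullSingletonClass μ]
    {f S : ℝ → E} {a : ℝ} (hf : LocallyIntegrableOn f (Ici a) μ)
    (hS : ∀ s ∈ Ici a, Tendsto (fun A => ∫ x in s..A, f x ∂μ) atTop (nhds (S s))) :
    ContinuousOn S (Ici a) := by
  have hint : ∀ {b c : ℝ}, a ≤ b → b ≤ c → IntervalIntegrable f μ b c := fun hb hbc =>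
    (intervalIntegrable_iff_integrableOn_Icc_of_le hbc).2 <|
      hf.integrableOn_compact_subset (Icc_subset_Ici_self.trans (Ici_subset_Ici.2 hb)) isCompact_Icc
  have hS_eq : ∀ s ∈ Ici a, S s = S a - ∫ x in a..s, f x ∂μ := fun s (hs : a ≤ s) => by
    refine tendsto_nhds_unique (hS s hs) (((hS a self_mem_Ici).sub_const _).congr' ?_)
    filter_upwards [eventually_ge_atTop s] with A hA
    exact integral_interval_sub_left (hint le_rfl (hs.trans hA)) (hint le_rfl hs)
  refine ContinuousOn.congr (continuousOn_const.sub fun s (hs : a ≤ s) => ?_) hS_eq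
  have hs' : a ≤ s + 1 := by linarith
  have hcont := continuousOn_primitive_interval' (hint le_rfl hs') left_mem_uIcc
  rw [uIcc_of_le hs'] at hcont
  refine (hcont s ⟨hs, by linarith⟩).mono_of_mem_nhdsWithin ?_
  rw [← Ici_inter_Iic]
  exact inter_mem_nhdsWithin _ (Iic_mem_nhds (lt_add_one s))

end NormedSpace

theorem integral_Ioi_add_rpow_of_lt {a c m : ℝ} (ha : a < -1) (hc : -m < c) :
    ∫ x in Ioi c, (x + m) ^ a = -(c + m) ^ (a + 1) / (a + 1) := by
  have hshift := (measurePreserving_add_right volume m).setIntegral_preimage_emb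
    (measurableEmbedding_addRight m) (fun x : ℝ => x ^ a) (Ioi (c + m))
  rwa [preimage_add_const_Ioi, add_sub_cancel_right,
    integral_Ioi_rpow_of_lt ha (by linarith)] at hshift

theorem continuousOn_rpow_mul_sin_rpow (p q : ℝ) :
    ContinuousOn (fun x : ℝ => x ^ p * sin (x ^ q)) (Ioi 0) := by
  have hrpow (r : ℝ) : ContinuousOn (fun x : ℝ => x ^ r) (Ioi 0) :=
    continuousOn_id.rpow_const fun x hx => Or.inl (ne_of_gt hx)
  exact (hrpow p).mul (continuous_sin.comp_continuousOn (hrpow q))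

theorem hasDerivAt_neg_cos_rpow_div {q x : ℝ} (hq : q ≠ 0) (hx : 0 < x) :
    HasDerivAt (fun x : ℝ => -cos (x ^ q) / q) (x ^ (q - 1) * sin (x ^ q)) x := by
  refine ((hasDerivAt_rpow_const (Or.inl hx.ne')).cos.neg.div_const q).congr_deriv ?_
  field_simp

theorem abs_integral_rpow_mul_sin_rpow_le {p q a b : ℝ} (hq : q ≠ 0) (hpq : p ≤ q - 1)
    (ha : 0 < a) (hab : a ≤ b) :
    |∫ x in a..b, x ^ p * sin (x ^ q)| ≤ 2 / |q| * a ^ (p - q + 1) := by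
  have hpos : ∀ x ∈ Icc a b, 0 < x := fun x hx => ha.trans_le hx.1
  have hsub : uIcc a b ⊆ Ioi 0 := by rwa [uIcc_of_le hab]
  have hsplit : ∫ x in a..b, x ^ p * sin (x ^ q)
      = ∫ x in a..b, x ^ (p - q + 1) • (x ^ (q - 1) * sin (x ^ q)) := by
    refine integral_congr fun x hx => ?_
    simp only [smul_eq_mul, ← mul_assoc, ← rpow_add (hsub hx)]
    ring_nf
  have hweight : ∀ x ∈ Icc a b,
      HasDerivAt (fun x => x ^ (p - q + 1)) ((p - q + 1) * x ^ (p - q + 1 - 1)) x :=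
    fun x hx => hasDerivAt_rpow_const (Or.inl (hpos x hx).ne')
  have hprimitive_le : ∀ x ∈ Icc a b, ‖-cos (x ^ q) / q‖ ≤ 1 / |q| := fun x _ => by
    rw [norm_div, norm_neg, norm_eq_abs, norm_eq_abs]
    gcongr
    exact abs_cos_le_one _
  have hbound := norm_integral_smul_deriv_le_of_deriv_nonpos hab hweight
    (fun x hx => hasDerivAt_neg_cos_rpow_div hq (hpos x hx))
    ((continuousOn_rpow_mul_sin_rpow (q - 1) q).mono hsub).intervalIntegrable
    (fun x hx => mul_nonpos_of_nonpos_of_nonneg (by linarith) (rpow_nonneg (hpos x hx).le _))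
    (rpow_nonneg (ha.le.trans hab) _) hprimitive_le
  rwa [← hsplit, norm_eq_abs, mul_one_div] at hbound

theorem abs_le_of_tendsto_integral_rpow_mul_sin_rpow {p q s L : ℝ} (hq : q ≠ 0)
    (hpq : p ≤ q - 1) (hs : -1 < s)
    (hL : Tendsto (fun A => ∫ τ in s..A, (1 + τ) ^ p * sin ((1 + τ) ^ q)) atTop (nhds L)) :
    |L| ≤ 2 / |q| * (s + 1) ^ (p - q + 1) := by
  refine le_of_tendsto hL.abs ?_
  filter_upwards [eventually_ge_atTop s] with A hA
  rw [integral_comp_add_left (fun x => x ^ p * sin (x ^ q)), add_comm s]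
  exact abs_integral_rpow_mul_sin_rpow_le hq hpq (by linarith) (by linarith)

theorem stmt16_general {p q t : ℝ} (hq : q ≠ 0) (hpq : p < q - 2) (ht : -1 < t) {S : ℝ → ℝ}
    (hS : ∀ s ∈ Ici t,
      Tendsto (fun A => ∫ τ in s..A, (1 + τ) ^ p * sin ((1 + τ) ^ q)) atTop (nhds (S s))) :
    IntegrableOn (fun s => |S s|) (Ici t) ∧
      ∫ s in Ici t, |S s| ≤ 2 / (|q| * (q - p - 2)) * (1 + t) ^ (p - q + 2) := by
  have hS_le : ∀ s ∈ Ici t, |S s| ≤ 2 / |q| * (s + 1) ^ (p - q + 1) := fun s hs =>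
    abs_le_of_tendsto_integral_rpow_mul_sin_rpow hq (by linarith) (ht.trans_le hs) (hS s hs)
  have hS_cont : ContinuousOn S (Ici t) := by
    refine continuousOn_Ici_of_tendsto_intervalIntegral
      (ContinuousOn.locallyIntegrableOn ?_ measurableSet_Ici) hS
    exact (continuousOn_rpow_mul_sin_rpow p q).comp (by fun_prop) fun s (hs : t ≤ s) =>
      show 0 < 1 + s by linarith
  have hbound_int : IntegrableOn (fun s : ℝ => 2 / |q| * (s + 1) ^ (p - q + 1)) (Ici t) :=
    integrableOn_Ici_iff_integrableOn_Ioi (by finiteness) |>.2 <|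
      (integrableOn_add_rpow_Ioi_of_lt (by linarith) ht).const_mul _
  have hS_int : IntegrableOn (fun s => |S s|) (Ici t) :=
    hbound_int.mono' (hS_cont.abs.aestronglyMeasurable measurableSet_Ici) <|
      (ae_restrict_mem measurableSet_Ici).mono fun s hs => by simpa using hS_le s hs
  refine ⟨hS_int, ?_⟩
  calc ∫ s in Ici t, |S s|
      ≤ ∫ s in Ici t, 2 / |q| * (s + 1) ^ (p - q + 1) :=
        setIntegral_mono_on hS_int hbound_int measurableSet_Ici hS_le
    _ = 2 / |q| * (-(t + 1) ^ (p - q + 1 + 1) / (p - q + 1 + 1)) := by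
        rw [MeasureTheory.integral_const_mul, integral_Ici_eq_integral_Ioi,
          integral_Ioi_add_rpow_of_lt (by linarith) ht]
    _ = 2 / (|q| * (q - p - 2)) * (1 + t) ^ (p - q + 2) := by
        rw [show p - q + 1 + 1 = -(q - p - 2) by ring, show p - q + 2 = -(q - p - 2) by ring,
          add_comm t, neg_div_neg_eq, div_mul_div_comm, div_mul_eq_mul_div]

/-- For `p ≥ -1`, `q > 1`, `p < q - 2` and
`σ₁ t = (1+t)^p sin ((1+t)^q)`, the iterated improper integral satisfies
`∫_t^∞ |∫_s^∞ σ₁(τ) dτ| ds ≤ C (1+t)^(p-q+2)`.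
Here `S s` denotes the (convergent) improper integral `∫_s^∞ σ₁`. -/
theorem stmt16 (p q : ℝ) (hp : -1 ≤ p) (hq : 1 < q) (hpq : p < q - 2)
    (σ₁ : ℝ → ℝ) (hσ₁ : ∀ t, σ₁ t = (1 + t) ^ p * Real.sin ((1 + t) ^ q)) :
    ∃ C > (0:ℝ), ∀ S : ℝ → ℝ,
      (∀ s, Tendsto (fun A => ∫ τ in s..A, σ₁ τ) atTop (nhds (S s))) →
      ∀ t ≥ (0:ℝ),
        IntegrableOn (fun s => |S s|) (Set.Ici t) ∧
        (∫ s in Set.Ici t, |S s|) ≤ C * (1 + t) ^ (p - q + 2) := by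
  obtain rfl : σ₁ = fun t => (1 + t) ^ p * sin ((1 + t) ^ q) := funext hσ₁
  exact ⟨2 / (|q| * (q - p - 2)), div_pos two_pos (mul_pos (abs_pos.2 (by linarith)) (by linarith)),
    fun S hS t ht => stmt16_general (by linarith) hpq (by linarith) fun s _ => hS s⟩
end

section
/- Let p ≥ −1, q > 1 with p < q − 2, let 0 < μ₀ < 1, let m be a positive integer, and set b(t) := μ₀(1+t)^{-1} + (1+t)^p sin((1+t)^q) and β₁ := −q + 1 + (−p+q−1)/(m+1). Then there is a constant C > 0 such that for all t ≥ 0 and all k = 0,…,m, |b^{(k)}(t)| ≤ C (1+t)^{−β₁(k+1)}. -/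
open MeasureTheory Filter Real Set

/-!
On `[1, ∞)`, each derivative of `x ^ a` gains a factor `x⁻¹`, while each derivative of
`sin (x ^ q)` costs a factor `x ^ (q - 1)`: in Faà di Bruno's formula the worst term is the one in
which every derivative falls on the phase exactly once. Hence the `k`-th derivatives of the two
summands of `b` are of orders `(1 + t) ^ (-1 - k)` and `(1 + t) ^ (p + k * (q - 1))`. The exponent
`-β₁ * (k + 1)` dominates the first of these because `β₁ ≤ 1`, and the second for all `k ≤ m`, with
equality at `k = m`.
-/

open Asymptotics
open scoped ContDiff

section SymbolClass

variable {E 𝔸 : Type*} [NormedAddCommGroup E] [NormedSpace ℝ E] [NormedRing 𝔸] [NormedAlgebra ℝ 𝔸]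

/-- Hörmander's symbol class `S^a_ρ` on the half-line `[1, ∞)`: `f` has order `a`, and each
derivative lowers the order by `ρ`. A negative `ρ` is allowed and describes functions whose
derivatives grow. Smoothness is required at each point of the closed half-line in the two-sided
sense, so that `iteratedDeriv` is meaningful at `1`. -/
structure IsSymbol (a ρ : ℝ) (f : ℝ → E) : Prop where
  contDiffAt : ∀ x ≥ 1, ContDiffAt ℝ ∞ f x
  isBigO : ∀ k : ℕ, iteratedDeriv k f =O[𝓟 (Ici 1)] fun x ↦ x ^ (a - ρ * k)

theorem isBigO_rpow_rpow_principal_Ici_one {a b : ℝ} (h : a ≤ b) :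
    (fun x : ℝ ↦ x ^ a) =O[𝓟 (Ici 1)] fun x ↦ x ^ b := by
  refine isBigO_principal.2 ⟨1, fun x (hx : 1 ≤ x) ↦ ?_⟩
  have hx₀ : 0 ≤ x := zero_le_one.trans hx
  rw [one_mul, norm_of_nonneg (rpow_nonneg hx₀ a), norm_of_nonneg (rpow_nonneg hx₀ b)]
  exact rpow_le_rpow_of_exponent_le hx h

theorem orderedFinpartition_sum_partSize {n : ℕ} (c : OrderedFinpartition n) :
    ∑ j, c.partSize j = n := by
  simpa using Fintype.card_congr c.equivSigma

theorem isSymbol_rpow (a : ℝ) : IsSymbol a 1 fun x : ℝ ↦ x ^ a where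
  contDiffAt x hx := contDiffAt_rpow_const_of_ne (by linarith)
  isBigO k := by
    simp only [iteratedDeriv_eq_iterate, funext (iter_deriv_rpow_const a · k), one_mul]
    exact isBigO_const_mul_self _ _ _

namespace IsSymbol

variable {a b ρ ρ' : ℝ}

theorem contDiffAt_natCast {f : ℝ → E} (hf : IsSymbol a ρ f) (k : ℕ) {x : ℝ} (hx : 1 ≤ x) :
    ContDiffAt ℝ k f x :=
  (hf.contDiffAt x hx).of_le (mod_cast le_top)

theorem of_type_le {f : ℝ → E} (hf : IsSymbol a ρ f) (h : ρ' ≤ ρ) : IsSymbol a ρ' f where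
  contDiffAt := hf.contDiffAt
  isBigO k := (hf.isBigO k).trans <| isBigO_rpow_rpow_principal_Ici_one <| by gcongr

theorem const_mul {f : ℝ → 𝔸} (c : 𝔸) (hf : IsSymbol a ρ f) :
    IsSymbol a ρ fun x ↦ c * f x where
  contDiffAt x hx := contDiffAt_const.mul (hf.contDiffAt x hx)
  isBigO k := by
    refine ((hf.isBigO k).const_mul_left c).congr' ?_ .rfl
    filter_upwards [mem_principal_self _] with x hx
    exact (iteratedDeriv_const_mul c (hf.contDiffAt_natCast k hx)).symm

theorem isBigO_iteratedDeriv_add {s : ℝ} {f g : ℝ → E} {k : ℕ} (hf : IsSymbol a ρ f)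
    (hg : IsSymbol b ρ' g) (h₁ : a - ρ * k ≤ s) (h₂ : b - ρ' * k ≤ s) :
    iteratedDeriv k (fun x ↦ f x + g x) =O[𝓟 (Ici 1)] fun x ↦ x ^ s := by
  refine (((hf.isBigO k).trans (isBigO_rpow_rpow_principal_Ici_one h₁)).add
    ((hg.isBigO k).trans (isBigO_rpow_rpow_principal_Ici_one h₂))).congr' ?_ .rfl
  filter_upwards [mem_principal_self _] with x hx
  exact (iteratedDeriv_fun_add (hf.contDiffAt_natCast k hx)
    (hg.contDiffAt_natCast k hx)).symm

theorem mul {f g : ℝ → 𝔸} (hf : IsSymbol a ρ f) (hg : IsSymbol b ρ g) :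
    IsSymbol (a + b) ρ fun x ↦ f x * g x where
  contDiffAt x hx := (hf.contDiffAt x hx).mul (hg.contDiffAt x hx)
  isBigO k := by
    have leibniz : (fun x ↦ ∑ i ∈ Finset.range (k + 1),
        k.choose i * iteratedDeriv i f x * iteratedDeriv (k - i) g x) =ᶠ[𝓟 (Ici 1)]
        iteratedDeriv k fun x ↦ f x * g x := by
      filter_upwards [mem_principal_self _] with x hx
      exact (iteratedDeriv_fun_mul (hf.contDiffAt_natCast k hx)
        (hg.contDiffAt_natCast k hx)).symm
    refine IsBigO.congr' (.fun_sum fun i hi ↦ ?_) leibniz .rfl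
    refine (((hf.isBigO i).const_mul_left _).mul (hg.isBigO (k - i))).congr' .rfl ?_
    filter_upwards [mem_principal_self _] with x (hx : 1 ≤ x)
    have hik : i ≤ k := Finset.mem_range_succ_iff.1 hi
    rw [← rpow_add (by linarith), Nat.cast_sub hik]
    congr 1
    ring

theorem comp_of_bounded_iteratedDeriv {g : ℝ → E} {φ : ℝ → ℝ} (hg : ContDiff ℝ ∞ g)
    (hg_bdd : ∀ k, iteratedDeriv k g =O[⊤] (1 : ℝ → ℝ)) (hφ : IsSymbol a ρ φ) (ha : 0 ≤ a) :
    IsSymbol 0 (ρ - a) (g ∘ φ) where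
  contDiffAt x hx := hg.contDiffAt.comp x (hφ.contDiffAt x hx)
  isBigO k := by
    have faaDiBruno : (fun x ↦ ∑ c : OrderedFinpartition k,
        (∏ j, iteratedDeriv (c.partSize j) φ x) • iteratedDeriv c.length g (φ x)) =ᶠ[𝓟 (Ici 1)]
        iteratedDeriv k (g ∘ φ) := by
      filter_upwards [mem_principal_self _] with x hx
      exact (iteratedDeriv_scomp_eq_sum_orderedFinpartition hg.contDiffAt
        (hφ.contDiffAt x hx) (mod_cast le_top)).symm
    refine IsBigO.congr' (.fun_sum fun c _ ↦ ?_) faaDiBruno .rfl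
    have exponent_sum : ∑ j, (a - ρ * c.partSize j) = a * c.length - ρ * k := by
      rw [Finset.sum_sub_distrib, ← Finset.mul_sum, ← Nat.cast_sum,
        orderedFinpartition_sum_partSize]
      simp [mul_comm]
    have exponent_le : a * c.length - ρ * k ≤ 0 - (ρ - a) * k := by
      have : a * c.length ≤ a * k := mul_le_mul_of_nonneg_left (mod_cast c.length_le) ha
      linarith
    refine IsBigO.trans ?_ (isBigO_rpow_rpow_principal_Ici_one exponent_le)
    refine ((IsBigO.finsetProd fun j _ ↦ hφ.isBigO (c.partSize j)).smul
      ((hg_bdd c.length).comp_tendsto tendsto_top)).congr' .rfl ?_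
    filter_upwards [mem_principal_self _] with x (hx : 1 ≤ x)
    rw [← exponent_sum, rpow_sum_of_pos (by linarith)]
    simp

end IsSymbol

end SymbolClass

theorem isSymbol_sin_rpow {q : ℝ} (hq : 0 ≤ q) : IsSymbol 0 (1 - q) fun x : ℝ ↦ sin (x ^ q) :=
  (isSymbol_rpow q).comp_of_bounded_iteratedDeriv contDiff_sin
    (fun k ↦ isBigO_of_le _ fun y ↦ by simpa using abs_iteratedDeriv_sin_le_one k y) hq

theorem isSymbol_rpow_mul_sin_rpow (p : ℝ) {q : ℝ} (hq : 0 ≤ q) :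
    IsSymbol p (1 - q) fun x : ℝ ↦ x ^ p * sin (x ^ q) := by
  simpa only [add_zero] using
    ((isSymbol_rpow p).of_type_le (sub_le_self 1 hq)).mul (isSymbol_sin_rpow hq)

theorem exists_pos_forall_norm_le_of_isBigO_principal {ι α E F : Type*} [SeminormedAddCommGroup E]
    [SeminormedAddCommGroup F] {I : Set ι} (hI : I.Finite) {s : Set α} {f : ι → α → E}
    {g : ι → α → F} (h : ∀ i ∈ I, f i =O[𝓟 s] g i) :
    ∃ C > (0 : ℝ), ∀ x ∈ s, ∀ i ∈ I, ‖f i x‖ ≤ C * ‖g i x‖ := by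
  have eventually_bound : ∀ᶠ C : ℝ in atTop, ∀ i ∈ I, ∀ x ∈ s, ‖f i x‖ ≤ C * ‖g i x‖ := by
    refine hI.eventually_all.2 fun i hi ↦ ?_
    simpa only [isBigOWith_principal] using isBigO_iff_eventually_isBigOWith.1 (h i hi)
  obtain ⟨C, hC_pos, hC⟩ := ((eventually_gt_atTop 0).and eventually_bound).exists
  exact ⟨C, hC_pos, fun x hx i hi ↦ hC i hi x hx⟩

/-- The exponent `β₁` of the theorem: the `k`-th derivative of `b` is compared with
`(1 + t) ^ (-β₁ * (k + 1))`. -/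
noncomputable def betaOne (p q : ℝ) (m : ℕ) : ℝ :=
  -q + 1 + (-p + q - 1) / (m + 1)

section Exponents

variable {p q : ℝ} {m : ℕ}

theorem betaOne_le_one (hp : -1 - m * q ≤ p) : betaOne p q m ≤ 1 := by
  have : (-p + q - 1) / (m + 1) ≤ q := (div_le_iff₀ (by positivity)).2 (by linarith)
  rw [betaOne]
  linarith

theorem neg_one_sub_le_neg_betaOne_mul (hp : -1 - m * q ≤ p) (k : ℕ) :
    -1 - k ≤ -betaOne p q m * (k + 1) := by
  have : betaOne p q m * (k + 1) ≤ 1 * (k + 1) := by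
    gcongr
    exact betaOne_le_one hp
  linarith

theorem sub_one_sub_mul_le_neg_betaOne_mul (hpq : p ≤ q - 1) {k : ℕ} (hk : k ≤ m) :
    p - (1 - q) * k ≤ -betaOne p q m * (k + 1) := by
  have gap_le : (-p + q - 1) * ((k + 1) / (m + 1)) ≤ -p + q - 1 := by
    refine mul_le_of_le_one_right (by linarith) ((div_le_one (by positivity)).2 ?_)
    gcongr
  calc p - (1 - q) * k = (q - 1) * (k + 1) - (-p + q - 1) := by ring
    _ ≤ (q - 1) * (k + 1) - (-p + q - 1) * ((k + 1) / (m + 1)) := by gcongr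
    _ = -betaOne p q m * (k + 1) := by rw [betaOne]; ring

end Exponents

theorem isBigO_iteratedDeriv_add_rpow_mul_sin_rpow {p q : ℝ} {m k : ℕ} (μ : ℝ)
    (hp : -1 - m * q ≤ p) (hpq : p ≤ q - 1) (hk : k ≤ m) :
    iteratedDeriv k (fun x : ℝ ↦ μ * x ^ (-1 : ℝ) + x ^ p * sin (x ^ q))
      =O[𝓟 (Ici 1)] fun x ↦ x ^ (-betaOne p q m * (k + 1)) := by
  have hq : 0 ≤ q := by
    have : 0 ≤ (m + 1) * q := by linarith
    exact nonneg_of_mul_nonneg_right this (by positivity)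
  have h_power : IsSymbol (-1) 1 fun x : ℝ ↦ μ * x ^ (-1 : ℝ) := (isSymbol_rpow (-1)).const_mul μ
  have h_chirp := isSymbol_rpow_mul_sin_rpow p hq
  exact h_power.isBigO_iteratedDeriv_add h_chirp
    (by simpa only [one_mul] using neg_one_sub_le_neg_betaOne_mul hp k)
    (sub_one_sub_mul_le_neg_betaOne_mul hpq hk)

theorem stmt17_general (p q μ₀ : ℝ) (m : ℕ) (hp : -1 - m * q ≤ p) (hpq : p ≤ q - 1)
    (b : ℝ → ℝ)
    (hb : ∀ t, b t = μ₀ * (1 + t)⁻¹ + (1 + t) ^ p * Real.sin ((1 + t) ^ q))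
    (β₁ : ℝ) (hβ₁ : β₁ = -q + 1 + (-p + q - 1) / (m + 1)) :
    ∃ C > (0 : ℝ), ∀ t ≥ (0 : ℝ), ∀ k ≤ m,
      |iteratedDeriv k b t| ≤ C * (1 + t) ^ (-β₁ * (k + 1)) := by
  obtain rfl : β₁ = betaOne p q m := hβ₁
  obtain ⟨C, hC_pos, hC⟩ := exists_pos_forall_norm_le_of_isBigO_principal (finite_Iic m)
    fun k hk ↦ isBigO_iteratedDeriv_add_rpow_mul_sin_rpow μ₀ hp hpq hk
  refine ⟨C, hC_pos, fun t ht k hk ↦ ?_⟩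
  let f : ℝ → ℝ := fun x ↦ μ₀ * x ^ (-1 : ℝ) + x ^ p * sin (x ^ q)
  have hbf : b = fun t ↦ f (1 + t) := by
    funext t
    rw [hb, ← rpow_neg_one]
  calc |iteratedDeriv k b t| = ‖iteratedDeriv k f (1 + t)‖ := by
        rw [hbf, iteratedDeriv_comp_const_add, norm_eq_abs]
    _ ≤ C * ‖(1 + t) ^ (-betaOne p q m * (k + 1))‖ := hC _ (le_add_of_nonneg_right ht) k hk
    _ = C * (1 + t) ^ (-betaOne p q m * (k + 1)) := by rw [norm_of_nonneg (by positivity)]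

/-- For `p ≥ -1`, `q > 1`, `p < q - 2`, `0 < μ₀ < 1`, a positive integer `m`,
`b t = μ₀ (1+t)⁻¹ + (1+t)^p sin ((1+t)^q)` and `β₁ = -q + 1 + (-p+q-1)/(m+1)`, the derivatives
of `b` satisfy `|b^(k)(t)| ≤ C (1+t)^(-β₁ (k+1))` for `k = 0, …, m` and `t ≥ 0`. -/
theorem stmt17 (p q μ₀ : ℝ) (m : ℕ) (hm : 1 ≤ m)
    (hp : -1 ≤ p) (hq : 1 < q) (hpq : p < q - 2)
    (hμ₀pos : 0 < μ₀) (hμ₀lt : μ₀ < 1)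
    (b : ℝ → ℝ)
    (hb : ∀ t, b t = μ₀ * (1 + t)⁻¹ + (1 + t) ^ p * Real.sin ((1 + t) ^ q))
    (β₁ : ℝ) (hβ₁ : β₁ = -q + 1 + (-p + q - 1) / (m + 1)) :
    ∃ C > (0:ℝ), ∀ t ≥ (0:ℝ), ∀ k ≤ m,
      |iteratedDeriv k b t| ≤ C * (1 + t) ^ (-β₁ * (k + 1)) := by
  have : 0 ≤ m * q := by positivity
  exact stmt17_general p q μ₀ m (by linarith) (by linarith) b hb β₁ hβ₁
end
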